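/- (Lemma 5.1(iv)) { ⟨Q^0, X⟩ : X ∈ Γ^A, ⟨Q^i, X⟩ = 0 (i = 1,…,m), ⟨H^0, X⟩ = 0 } = { f̄_0(0, w) : w ∈ S̃_m }. In particular ζ(Γ^A ∩ J_m, Q^0, 0) := inf{ ⟨Q^0, X⟩ : X ∈ Γ^A ∩ J_m, ⟨H^0, X⟩ = 0 } equals inf{ f̄_0(0, w) : w ∈ S̃_m } (infima in the extended reals). -/

import Mathlib

open MvPolynomial

noncomputable section

open scoped Classical

variable {n : ℕ}

/-- The vector `u^A(x)` of monomials `x^α` for `α ∈ A`. -/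
def uA (A : Finset (Fin (n+1) →₀ ℕ)) (x : Fin (n+1) → ℝ) (a : A) : ℝ :=
  ∏ i, x i ^ (a : Fin (n+1) →₀ ℕ) i

/-- The rank-one moment matrix `u^A(x) u^A(x)ᵀ`. -/
def momMat (A : Finset (Fin (n+1) →₀ ℕ)) (x : Fin (n+1) → ℝ) : Matrix A A ℝ :=
  fun a b => uA A x a * uA A x b

/-- The cone `Γ^A = { u^A(x) u^A(x)ᵀ : x ∈ ℝ^{1+n}, x ≥ 0 }`. -/
def GammaA (A : Finset (Fin (n+1) →₀ ℕ)) : Set (Matrix A A ℝ) :=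
  { X | ∃ x : Fin (n+1) → ℝ, (∀ i, 0 ≤ x i) ∧ X = momMat A x }

/-- The extended completely positive cone `CPP^A = conv Γ^A`. -/
def CPPA (A : Finset (Fin (n+1) →₀ ℕ)) : Set (Matrix A A ℝ) :=
  convexHull ℝ (GammaA A)

/-- The trace inner product `⟨P, X⟩ = Σ_{a,b} P_{ab} X_{ab}`. -/
def ip {A : Finset (Fin (n+1) →₀ ℕ)} (P X : Matrix A A ℝ) : ℝ :=
  ∑ a : A, ∑ b : A, P a b * X a b

/-- The matrix `H^0` whose `(α^ω, α^ω)` entry is `1` and all other entries are `0`. -/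
def H0mat (A : Finset (Fin (n+1) →₀ ℕ)) (ω : ℕ) : Matrix A A ℝ :=
  fun a b =>
    if (a : Fin (n+1) →₀ ℕ) = Finsupp.single 0 ω ∧ (b : Fin (n+1) →₀ ℕ) = Finsupp.single 0 ω
    then 1 else 0

/-- `J_p = { X ∈ CPP^A : ⟨Q^i, X⟩ = 0 (i = 1,…,p) }`. -/
def Jset (A : Finset (Fin (n+1) →₀ ℕ)) (Q : ℕ → Matrix A A ℝ) (p : ℕ) :
    Set (Matrix A A ℝ) :=
  { X ∈ CPPA A | ∀ i, 1 ≤ i → i ≤ p → ip (Q i) X = 0 }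

/-- `S̄_p = { x ∈ ℝ^{1+n}_+ : f̄_i(x) = 0 (i = 1,…,p) }`. -/
def Sbar (fb : ℕ → MvPolynomial (Fin (n+1)) ℝ) (p : ℕ) : Set (Fin (n+1) → ℝ) :=
  { x | (∀ j, 0 ≤ x j) ∧ ∀ i, 1 ≤ i → i ≤ p → eval x (fb i) = 0 }

/-- `S̃_p = { w ∈ ℝ^n_+ : f̄_i(0, w) = 0 (i = 1,…,p) }`. -/
def Stilde (fb : ℕ → MvPolynomial (Fin (n+1)) ℝ) (p : ℕ) : Set (Fin n → ℝ) :=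
  { w | (∀ j, 0 ≤ w j) ∧ ∀ i, 1 ≤ i → i ≤ p → eval (Fin.cons 0 w) (fb i) = 0 }

/-- `S_p = { w ∈ ℝ^n_+ : f_i(w) = 0 (i = 1,…,p) }`. -/
def Sset (f : ℕ → MvPolynomial (Fin n) ℝ) (p : ℕ) : Set (Fin n → ℝ) :=
  { w | (∀ j, 0 ≤ w j) ∧ ∀ i, 1 ≤ i → i ≤ p → eval w (f i) = 0 }

/-- Infimum of a set of reals, taken in the extended reals. -/
def erInf (s : Set ℝ) : EReal := sInf ((fun r : ℝ => (r : EReal)) '' s)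

/-- `F` is a face of the convex set `C`. -/
def IsFace {V : Type*} [AddCommGroup V] [Module ℝ V] (C F : Set V) : Prop :=
  F ⊆ C ∧ Convex ℝ F ∧
    ∀ y ∈ C, ∀ z ∈ C, ∀ t : ℝ, 0 < t → t < 1 → (1 - t) • y + t • z ∈ F → y ∈ F ∧ z ∈ F

/-!
A matrix `u^A(x) u^A(x)ᵀ` has `(α^ω, α^ω)` entry `x₀^(2ω)`, and this entry is what `H^0` measures.
As `ω > 0`, the slice `⟨H^0, X⟩ = 0` of `Γ^A` therefore consists of the matrices with `x = (0, w)`,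
`w ≥ 0`, and on these `⟨Q^i, X⟩ = f̄_i(0, w)`. Passing from the constraints to `J_m` changes nothing
inside `Γ^A`, because `Γ^A ⊆ CPP^A`.
-/

section

variable {A : Finset (Fin (n + 1) →₀ ℕ)} {ω p : ℕ}

theorem uA_single {j : Fin (n + 1)} (hA : Finsupp.single j ω ∈ A) (x : Fin (n + 1) → ℝ) :
    uA A x ⟨Finsupp.single j ω, hA⟩ = x j ^ ω := by
  have hprod : uA A x ⟨Finsupp.single j ω, hA⟩ = (Finsupp.single j ω).prod fun i k => x i ^ k :=
    (Finsupp.prod_fintype _ _ fun i => pow_zero (x i)).symm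
  rw [hprod, Finsupp.prod_single_index (h := fun i k => x i ^ k) (pow_zero (x j))]

theorem ip_single_one (a b : A) (X : Matrix A A ℝ) : ip (Matrix.single a b 1) X = X a b := by
  simp [ip, Matrix.single_apply, ite_and]

theorem H0mat_eq_single (hA : Finsupp.single 0 ω ∈ A) :
    H0mat A ω = Matrix.single ⟨Finsupp.single 0 ω, hA⟩ ⟨Finsupp.single 0 ω, hA⟩ 1 := by
  ext a b
  simp only [H0mat, Matrix.single_apply, Subtype.ext_iff, eq_comm]

theorem ip_H0mat_momMat (hA : Finsupp.single 0 ω ∈ A) (x : Fin (n + 1) → ℝ) :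
    ip (H0mat A ω) (momMat A x) = x 0 ^ ω * x 0 ^ ω := by
  rw [H0mat_eq_single hA, ip_single_one, momMat, uA_single hA]

theorem ip_H0mat_momMat_eq_zero_iff (hω : ω ≠ 0) (hA : Finsupp.single 0 ω ∈ A)
    (x : Fin (n + 1) → ℝ) : ip (H0mat A ω) (momMat A x) = 0 ↔ x 0 = 0 := by
  rw [ip_H0mat_momMat hA, mul_self_eq_zero, pow_eq_zero_iff hω]

theorem mem_GammaA_and_ip_H0mat_eq_zero_iff (hω : ω ≠ 0) (hA : Finsupp.single 0 ω ∈ A)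
    {X : Matrix A A ℝ} :
    X ∈ GammaA A ∧ ip (H0mat A ω) X = 0 ↔
      ∃ w : Fin n → ℝ, (∀ j, 0 ≤ w j) ∧ X = momMat A (Fin.cons 0 w) := by
  constructor
  · rintro ⟨⟨x, hx, rfl⟩, hX⟩
    have hx0 : x 0 = 0 := (ip_H0mat_momMat_eq_zero_iff hω hA x).mp hX
    exact ⟨Fin.tail x, fun j => hx j.succ, by rw [← hx0, Fin.cons_self_tail]⟩
  · rintro ⟨w, hw, rfl⟩
    exact ⟨⟨Fin.cons 0 w, Fin.cases le_rfl hw, rfl⟩,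
      (ip_H0mat_momMat_eq_zero_iff hω hA _).mpr rfl⟩

theorem setOf_mem_GammaA_ip_eq_zero_eq_image_Stilde (hω : ω ≠ 0) (hA : Finsupp.single 0 ω ∈ A)
    {fb : ℕ → MvPolynomial (Fin (n + 1)) ℝ} {Q : ℕ → Matrix A A ℝ}
    (hQ : ∀ i, 1 ≤ i → i ≤ p → ∀ w : Fin n → ℝ,
      eval (Fin.cons 0 w) (fb i) = ip (Q i) (momMat A (Fin.cons 0 w))) :
    {X ∈ GammaA A | (∀ i, 1 ≤ i → i ≤ p → ip (Q i) X = 0) ∧ ip (H0mat A ω) X = 0} =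
      (fun w => momMat A (Fin.cons 0 w)) '' Stilde fb p := by
  ext X
  constructor
  · rintro ⟨hX, hQX, hHX⟩
    obtain ⟨w, hw, rfl⟩ := (mem_GammaA_and_ip_H0mat_eq_zero_iff hω hA).mp ⟨hX, hHX⟩
    exact ⟨w, ⟨hw, fun i h1 hi => (hQ i h1 hi w).trans (hQX i h1 hi)⟩, rfl⟩
  · rintro ⟨w, ⟨hw, hfw⟩, rfl⟩
    obtain ⟨hX, hHX⟩ := (mem_GammaA_and_ip_H0mat_eq_zero_iff hω hA).mpr ⟨w, hw, rfl⟩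
    exact ⟨hX, fun i h1 hi => (hQ i h1 hi w).symm.trans (hfw i h1 hi), hHX⟩

theorem GammaA_inter_Jset (Q : ℕ → Matrix A A ℝ) :
    GammaA A ∩ Jset A Q p = {X ∈ GammaA A | ∀ i, 1 ≤ i → i ≤ p → ip (Q i) X = 0} := by
  ext X
  exact and_congr_right fun hX => and_iff_right (subset_convexHull ℝ _ hX)

end

theorem stmt12_general {ω m : ℕ} (hω : ω ≠ 0) {A : Finset (Fin (n + 1) →₀ ℕ)}
    (hA : Finsupp.single 0 ω ∈ A) {fb : ℕ → MvPolynomial (Fin (n + 1)) ℝ} {Q : ℕ → Matrix A A ℝ}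
    (hQ : ∀ i ≤ m, ∀ w : Fin n → ℝ,
      eval (Fin.cons 0 w) (fb i) = ip (Q i) (momMat A (Fin.cons 0 w))) :
    ({ y : ℝ | ∃ X ∈ GammaA A, (∀ i, 1 ≤ i → i ≤ m → ip (Q i) X = 0) ∧
          ip (H0mat A ω) X = 0 ∧ y = ip (Q 0) X }
        = { y : ℝ | ∃ w ∈ Stilde fb m, y = eval (Fin.cons 0 w) (fb 0) }) ∧
    erInf { y : ℝ | ∃ X ∈ GammaA A ∩ Jset A Q m,
          ip (H0mat A ω) X = 0 ∧ y = ip (Q 0) X }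
      = erInf { y : ℝ | ∃ w ∈ Stilde fb m, y = eval (Fin.cons 0 w) (fb 0) } := by
  have hfeasible := setOf_mem_GammaA_ip_eq_zero_eq_image_Stilde hω hA fun i _ => hQ i
  have hvalues : { y : ℝ | ∃ X ∈ GammaA A, (∀ i, 1 ≤ i → i ≤ m → ip (Q i) X = 0) ∧
      ip (H0mat A ω) X = 0 ∧ y = ip (Q 0) X } =
      { y : ℝ | ∃ w ∈ Stilde fb m, y = eval (Fin.cons 0 w) (fb 0) } := by
    ext y
    calc
      _ ↔ ∃ X ∈ {X ∈ GammaA A | (∀ i, 1 ≤ i → i ≤ m → ip (Q i) X = 0) ∧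
            ip (H0mat A ω) X = 0}, y = ip (Q 0) X := by
        simp only [Set.mem_ofPred_eq, and_assoc]
      _ ↔ ∃ w ∈ Stilde fb m, y = ip (Q 0) (momMat A (Fin.cons 0 w)) := by
        rw [hfeasible, Set.exists_mem_image]
      _ ↔ _ := by simp only [Set.mem_ofPred_eq, hQ 0 (Nat.zero_le m)]
  refine ⟨hvalues, ?_⟩
  rw [← hvalues]
  simp only [GammaA_inter_Jset, Set.mem_ofPred_eq, and_assoc]

theorem stmt12
    (n ω m : ℕ) (hn : 0 < n) (hω : 0 < ω) (hm : 0 < m)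
    (A : Finset (Fin (n+1) →₀ ℕ)) (hA : A.Nonempty)
    (hAdeg : ∀ α ∈ A, ∑ i, α i = ω)
    (hAtop : Finsupp.single (0 : Fin (n+1)) ω ∈ A)
    (f : ℕ → MvPolynomial (Fin n) ℝ)
    (fb : ℕ → MvPolynomial (Fin (n+1)) ℝ)
    (hfdeg : ∀ i ≤ m, (f i).totalDegree ≤ 2 * ω)
    (hfbhom : ∀ i ≤ m, (fb i).IsHomogeneous (2 * ω))
    (hfb1 : ∀ i ≤ m, ∀ w : Fin n → ℝ, eval (Fin.cons 1 w) (fb i) = eval w (f i))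
    (Q : ℕ → Matrix A A ℝ)
    (hQsymm : ∀ i ≤ m, (Q i).IsSymm)
    (hQrep : ∀ i ≤ m, ∀ x : Fin (n+1) → ℝ, eval x (fb i) = ip (Q i) (momMat A x))
    :
    ({ y : ℝ | ∃ X ∈ GammaA A, (∀ i, 1 ≤ i → i ≤ m → ip (Q i) X = 0) ∧
          ip (H0mat A ω) X = 0 ∧ y = ip (Q 0) X }
        = { y : ℝ | ∃ w ∈ Stilde fb m, y = eval (Fin.cons 0 w) (fb 0) }) ∧
    erInf { y : ℝ | ∃ X ∈ GammaA A ∩ Jset A Q m,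
          ip (H0mat A ω) X = 0 ∧ y = ip (Q 0) X }
      = erInf { y : ℝ | ∃ w ∈ Stilde fb m, y = eval (Fin.cons 0 w) (fb 0) } :=
  stmt12_general hω.ne' hAtop fun i hi w => hQrep i hi (Fin.cons 0 w)
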